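/- arXiv:0905.0187 — 3 statements merged into one kernel-verified Lean document; each statement's English description precedes it below -/
import Mathlib

section
/- Let ξ be a state on ℓ^∞ invariant under the unit shift T_1, and let a > 0, b ≥ 0. Then ξ({∫_{ak+b−1}^{ak+b} f(t) dt}_{k≥1}) = ξ({f(ak+b)}_{k≥1}), where entries with index k such that ak+b < 1 are set to 0. -/
open Filter

/-- A bounded real sequence (an element of `ℓ^∞`). -/
def IsBddSeq (a : ℕ → ℝ) : Prop := ∃ C, ∀ k, |a k| ≤ C

/-- A state on `ℓ^∞`: a positive linear functional with `ξ(1) = 1`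
(linearity and positivity are required on bounded sequences). -/
def IsLinfState (ξ : (ℕ → ℝ) → ℝ) : Prop :=
  (∀ a b : ℕ → ℝ, IsBddSeq a → IsBddSeq b → ξ (a + b) = ξ a + ξ b) ∧
  (∀ (c : ℝ) (a : ℕ → ℝ), IsBddSeq a → ξ (c • a) = c * ξ a) ∧
  (∀ a : ℕ → ℝ, IsBddSeq a → (∀ k, 0 ≤ a k) → 0 ≤ ξ a) ∧
  ξ (fun _ => 1) = 1

/-- A generalised limit: a state on `ℓ^∞` with
`liminf a ≤ ξ a ≤ limsup a` for every bounded nonnegative sequence. -/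
def IsGenLim (ξ : (ℕ → ℝ) → ℝ) : Prop :=
  IsLinfState ξ ∧
  ∀ a : ℕ → ℝ, IsBddSeq a → (∀ k, 0 ≤ a k) →
    liminf a atTop ≤ ξ a ∧ ξ a ≤ limsup a atTop

/-- Invariance under the unit shift `T_1`. -/
def ShiftInv (ξ : (ℕ → ℝ) → ℝ) : Prop :=
  ∀ a : ℕ → ℝ, IsBddSeq a → ξ (fun k => a (k + 1)) = ξ a

/-- Invariance under the dilations `D_j`, `D_j(a)_k = a_{⌈k/j⌉}`
(`⌈k/j⌉ = (k + j - 1)/j` in natural division). -/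
def DilInv (ξ : (ℕ → ℝ) → ℝ) : Prop :=
  ∀ j : ℕ, 0 < j → ∀ a : ℕ → ℝ, IsBddSeq a →
    ξ (fun k => a ((k + j - 1) / j)) = ξ a

lemma bdd_shift {x : ℕ → ℝ} (hx : IsBddSeq x) (N : ℕ) : IsBddSeq (fun k => x (k + N)) := by
  obtain ⟨C, hC⟩ := hx
  exact ⟨C, fun k => hC _⟩

lemma shift_many {ξ : (ℕ → ℝ) → ℝ} (hT : ShiftInv ξ) {x : ℕ → ℝ} (hx : IsBddSeq x) (N : ℕ) :
    ξ (fun k => x (k + N)) = ξ x := by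
  induction N with
  | zero => rfl
  | succ n ih =>
    rw [← ih, ← hT _ (bdd_shift hx n)]
    congr 1
    funext k
    congr 1
    omega

lemma state_mono {ξ : (ℕ → ℝ) → ℝ} (hst : IsLinfState ξ) (hT : ShiftInv ξ) {x y z : ℕ → ℝ}
    (hx : IsBddSeq x) (hy : IsBddSeq y) (hz : Filter.Tendsto z Filter.atTop (nhds 0))
    (h : ∀ᶠ k in Filter.atTop, x k ≤ y k + z k) : ξ x ≤ ξ y := by
  obtain ⟨hadd, hsmul, hpos, hone⟩ := hst
  refine le_of_forall_pos_le_add fun ε hε => ?_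
  obtain ⟨N, hN⟩ := Filter.eventually_atTop.1 (h.and (hz.eventually (gt_mem_nhds hε)))
  rw [← shift_many hT hx N, ← shift_many hT hy N]
  have bx := bdd_shift hx N
  have hby2 := bdd_shift hy N
  have b1 : IsBddSeq (fun _ => (1 : ℝ)) := ⟨1, fun k => by simp⟩
  have bs : ∀ (c : ℝ) {w : ℕ → ℝ}, IsBddSeq w → IsBddSeq (c • w) := by
    rintro c w ⟨C, hC⟩
    refine ⟨|c| * C, fun k => ?_⟩
    simp only [Pi.smul_apply, smul_eq_mul, abs_mul]
    exact mul_le_mul_of_nonneg_left (hC k) (abs_nonneg _)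
  have ba : ∀ {v w : ℕ → ℝ}, IsBddSeq v → IsBddSeq w → IsBddSeq (v + w) := by
    rintro v w ⟨C, hC⟩ ⟨D, hD⟩
    exact ⟨C + D, fun k => (abs_add_le _ _).trans (add_le_add (hC k) (hD k))⟩
  have key := hpos _ (ba (ba hby2 (bs ε b1)) (bs (-1) bx)) (fun k => by
    have := hN (k + N) (by omega)
    simp only [Pi.add_apply, Pi.smul_apply, smul_eq_mul]
    linarith [this.1, this.2])
  rw [hadd _ _ (ba hby2 (bs ε b1)) (bs (-1) bx), hadd _ _ hby2 (bs ε b1), hsmul _ _ b1,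
    hsmul _ _ bx, hone] at key
  linarith

lemma f_integrable {f g : ℝ → ℝ} (hfg : ∀ t > (0 : ℝ), f t = g t / t)
    (hg : MonotoneOn g (Set.Ici 0)) {s : ℝ} (hs : 1 < s) :
    IntervalIntegrable f MeasureTheory.volume (s - 1) s := by
  have hle : s - 1 ≤ s := by linarith
  have h1 : IntervalIntegrable g MeasureTheory.volume (s - 1) s := by
    apply MonotoneOn.intervalIntegrable
    rw [Set.uIcc_of_le hle]
    exact hg.mono fun t ht => by
      have := ht.1
      simp only [Set.mem_Ici]; linarith
  have h2 : ContinuousOn (fun t : ℝ => t⁻¹) (Set.uIcc (s - 1) s) := by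
    rw [Set.uIcc_of_le hle]
    exact continuousOn_id.inv₀ fun t ht => by
      have := ht.1
      simp only [id]; linarith
  refine (h1.mul_continuousOn h2).congr fun t ht => ?_
  rw [Set.uIoc_of_le hle] at ht
  have : 0 < t := by linarith [ht.1]
  simp only [hfg t this, div_eq_mul_inv]

lemma int_bounds {f : ℝ → ℝ} {s c d : ℝ}
    (hi : IntervalIntegrable f MeasureTheory.volume (s - 1) s)
    (h : ∀ t ∈ Set.Icc (s - 1) s, c ≤ f t ∧ f t ≤ d) :
    c ≤ (∫ t in (s - 1)..s, f t) ∧ (∫ t in (s - 1)..s, f t) ≤ d := by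
  have hle : s - 1 ≤ s := by linarith
  have h1 := intervalIntegral.integral_mono_on hle (intervalIntegrable_const (c := c)) hi
    fun t ht => (h t ht).1
  have h2 := intervalIntegral.integral_mono_on hle hi (intervalIntegrable_const (c := d))
    fun t ht => (h t ht).2
  simp at h1 h2
  exact ⟨h1, h2⟩

/-- comparison of `f` at two points `0 < p ≤ q` -/
lemma f_compare {f g : ℝ → ℝ} {C : ℝ} (hC : ∀ t ≥ (0 : ℝ), |f t| ≤ C)
    (hfg : ∀ t > (0 : ℝ), f t = g t / t)
    (hg : MonotoneOn g (Set.Ici 0)) {p q D m : ℝ} (hm : 0 < m) (hmp : m ≤ p) (hpq : p ≤ q)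
    (hD : q - p ≤ D) : f p ≤ f q + C * D / m := by
  have hp : 0 < p := by linarith
  have hq : 0 < q := by linarith
  have h0 : g p ≤ g q := hg (Set.mem_Ici.2 hp.le) (Set.mem_Ici.2 hq.le) hpq
  have h1 : f p ≤ f q + f q * (q - p) / p := by
    have : f q + f q * (q - p) / p = g q / p := by
      rw [hfg q hq]; field_simp; ring
    rw [this, hfg p hp]
    gcongr
  have h2 : f q * (q - p) / p ≤ C * D / m := by
    have hC0 : 0 ≤ C := (abs_nonneg _).trans (hC q hq.le)
    have := (le_abs_self _).trans (hC q hq.le)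
    have h3 : f q * (q - p) ≤ C * D :=
      (mul_le_mul_of_nonneg_right this (by linarith)).trans
        (mul_le_mul_of_nonneg_left hD hC0)
    have h4 : 0 ≤ C * D := mul_nonneg hC0 (by linarith)
    exact (div_le_div_of_nonneg_right h3 hp.le).trans (div_le_div_of_nonneg_left h4 hm hmp)
  linarith

/-- comparison upwards with reference value at the lower point -/
lemma f_compare_low {f g : ℝ → ℝ} {C : ℝ} (hC : ∀ t ≥ (0 : ℝ), |f t| ≤ C)
    (hfg : ∀ t > (0 : ℝ), f t = g t / t)
    (hg : MonotoneOn g (Set.Ici 0)) {p q D : ℝ} (hp : 0 < p) (hpq : p ≤ q)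
    (hD : q - p ≤ D) : f p - C * D / p ≤ f q := by
  have := f_compare hC hfg hg hp le_rfl hpq hD
  linarith

/-- for a `T_1`-invariant state `ξ` on `ℓ^∞` and `a > 0`, `b ≥ 0`,
`ξ({∫_{ak+b−1}^{ak+b} f(t) dt}_k) = ξ({f(ak+b)}_k)`, where entries with
`ak + b < 1` are set to `0`. -/
theorem shiftInv_state_average_eq_value
    (ξ : (ℕ → ℝ) → ℝ) (hst : IsLinfState ξ) (hT : ShiftInv ξ)
    (f g : ℝ → ℝ) (hfb : ∃ C, ∀ t ≥ (0 : ℝ), |f t| ≤ C)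
    (hfg : ∀ t > (0 : ℝ), f t = g t / t) (hg : MonotoneOn g (Set.Ici 0))
    (a b : ℝ) (ha : 0 < a) (hb : 0 ≤ b) :
    ξ (fun k => if 1 ≤ a * k + b then ∫ t in (a * k + b - 1)..(a * k + b), f t else 0)
      = ξ (fun k => if 1 ≤ a * k + b then f (a * k + b) else 0) := by
  obtain ⟨C, hC⟩ := hfb
  have hC0 : 0 ≤ C := (abs_nonneg _).trans (hC 0 le_rfl)
  have hlin : ∀ c : ℝ, Tendsto (fun k : ℕ => a * (k : ℝ) + c) atTop atTop := fun c =>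
    tendsto_atTop_add_const_right _ _ (tendsto_natCast_atTop_atTop.const_mul_atTop ha)
  have bI : IsBddSeq (fun k : ℕ =>
      if 1 ≤ a * k + b then ∫ t in (a * k + b - 1)..(a * k + b), f t else 0) := by
    refine ⟨C, fun k => ?_⟩
    dsimp only
    split_ifs with h
    · have := intervalIntegral.norm_integral_le_of_norm_le_const (a := a * k + b - 1)
        (b := a * k + b) (f := f) (C := C) (fun t ht => by
          rw [Set.uIoc_of_le (by linarith)] at ht
          exact hC t (by linarith [ht.1]))
      simpa using this
    · simpa using hC0
  have bF : IsBddSeq (fun k : ℕ => if 1 ≤ a * k + b then f (a * k + b) else 0) := by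
    refine ⟨C, fun k => ?_⟩
    dsimp only
    split_ifs with h
    · exact hC _ (by linarith)
    · simpa using hC0
  apply le_antisymm
  · refine state_mono hst hT bI bF (z := fun k : ℕ => C * 1 / (a * k + (b - 1)))
      (tendsto_const_nhds.div_atTop (hlin _)) ?_
    filter_upwards [(hlin b).eventually_gt_atTop 1] with k hk
    rw [if_pos hk.le, if_pos hk.le]
    refine (int_bounds (c := -C) (f_integrable hfg hg hk) fun t ht => ?_).2
    refine ⟨(abs_le.1 (hC t (by linarith [ht.1]))).1, ?_⟩
    exact f_compare hC hfg hg (by linarith) (by linarith [ht.1]) ht.2 (by linarith [ht.1])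
  · obtain ⟨L, hL⟩ := exists_nat_ge (1 / a)
    have hL' : 1 ≤ a * L := by
      rw [div_le_iff₀ ha] at hL; linarith
    rw [← shift_many hT bI L]
    refine state_mono hst hT bF (bdd_shift bI L) (z := fun k : ℕ => C * (a * L) / (a * k + b))
      (tendsto_const_nhds.div_atTop (hlin _)) ?_
    filter_upwards [(hlin b).eventually_gt_atTop 1] with k hk
    have e : a * ((k + L : ℕ) : ℝ) + b = a * k + b + a * L := by push_cast; ring
    rw [e, if_pos hk.le, if_pos (by linarith), ← sub_le_iff_le_add]
    refine (int_bounds (d := C) (f_integrable hfg hg (by linarith)) fun t ht => ?_).1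
    refine ⟨?_, (abs_le.1 (hC t (by linarith [ht.1]))).2⟩
    exact f_compare_low hC hfg hg (by linarith) (by linarith [ht.1]) (by linarith [ht.2])
end

section
/- Let ξ be a state on ℓ^∞ invariant under the unit shift T_1 (a Banach limit). Define g(t) := (log(1+t))^{−1} ∫_1^t μ_{⌊s⌋} ds for t ≥ 1 and g(t) := 0 for 0 ≤ t < 1. Then: (a) lim_{n→∞} ( sup_{t∈[n,n+1)} g(t) − inf_{t∈[n,n+1)} g(t) ) = 0; and (b) ξ({∫_{n−1}^{n} |g(e^t) − g(⌊e^t⌋)| dt}_{n≥1}) = 0. -/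
open Filter

lemma aux_bdd {a : ℕ → ℝ} (ha : Tendsto a atTop (nhds 0)) : IsBddSeq a := by
  obtain ⟨C, hC⟩ := (Metric.isBounded_range_of_tendsto a ha).exists_norm_le
  exact ⟨C, fun k => hC _ ⟨k, rfl⟩⟩

lemma aux_shift (ξ : (ℕ → ℝ) → ℝ) (hT : ShiftInv ξ) {a : ℕ → ℝ} (ha : IsBddSeq a) (N : ℕ) :
    ξ (fun k => a (k + N)) = ξ a := by
  obtain ⟨C, hC⟩ := ha
  induction N with
  | zero => rfl
  | succ N ih =>
    rw [← ih, ← hT (fun k => a (k + N)) ⟨C, fun k => hC _⟩]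
    congr 1
    funext k
    congr 1
    omega

lemma aux_le (ξ : (ℕ → ℝ) → ℝ) (hst : IsLinfState ξ) {a : ℕ → ℝ} {ε : ℝ}
    (h : ∀ k, |a k| ≤ ε) : ξ a ≤ ε := by
  obtain ⟨h1, h2, h3, h4⟩ := hst
  have ba : IsBddSeq a := ⟨ε, h⟩
  have b1 : IsBddSeq (fun _ => (1 : ℝ)) := ⟨1, fun _ => by simp⟩
  have be : IsBddSeq (ε • (fun _ : ℕ => (1 : ℝ))) := ⟨|ε|, fun _ => by simp⟩
  have bn : IsBddSeq ((-1 : ℝ) • a) := ⟨ε, fun k => by simpa using h k⟩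
  have bs : IsBddSeq (ε • (fun _ : ℕ => (1 : ℝ)) + (-1 : ℝ) • a) :=
    ⟨|ε| + ε, fun k => by
      have := abs_add_le ε (-a k)
      rw [abs_neg] at this
      simpa using this.trans (by linarith [h k])⟩
  have := h3 _ bs (fun k => by have := (abs_le.1 (h k)).2; simp; linarith)
  rw [h1 _ _ be bn, h2 _ _ b1, h2 _ _ ba, h4] at this
  linarith

lemma aux_zero (ξ : (ℕ → ℝ) → ℝ) (hst : IsLinfState ξ) (hT : ShiftInv ξ) {a : ℕ → ℝ}
    (ha : Tendsto a atTop (nhds 0)) (hn : ∀ k, 0 ≤ a k) : ξ a = 0 := by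
  have hb := aux_bdd ha
  refine le_antisymm (le_of_forall_pos_le_add fun ε hε => ?_) (hst.2.2.1 a hb hn)
  obtain ⟨N, hN⟩ := (Metric.tendsto_atTop.1 ha) ε hε
  rw [← aux_shift ξ hT hb N, zero_add]
  refine aux_le ξ hst fun k => ?_
  have := hN (k + N) (by omega)
  rw [Real.dist_eq, sub_zero] at this
  exact this.le

lemma aux_osc (μ : ℕ → ℝ) (hmono : Antitone μ) (hpos : ∀ j, 0 ≤ μ j)
    (hsum : ∃ C, ∀ k : ℕ, ∑ j ∈ Finset.Icc 1 k, μ j ≤ C * Real.log (1 + k))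
    (g : ℝ → ℝ)
    (hgdef : ∀ t : ℝ, g t =
      if 1 ≤ t then (Real.log (1 + t))⁻¹ * ∫ s in (1 : ℝ)..t, μ ⌊s⌋₊ else 0) :
    ∃ K, 0 ≤ K ∧ ∀ n : ℕ, 1 ≤ n → ∀ t : ℝ, n ≤ t → t < n + 1 →
      |g t - g n| ≤ K / Real.log (1 + n) := by
  obtain ⟨C, hC⟩ := hsum
  refine ⟨μ 0 + |C|, by have := hpos 0; positivity, fun n hn t hnt htn => ?_⟩
  have hn1 : (1 : ℝ) ≤ n := by exact_mod_cast hn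
  have anti : Antitone (fun s : ℝ => μ ⌊s⌋₊) := fun x y h => hmono (Nat.floor_mono h)
  have hint : ∀ a b : ℝ, IntervalIntegrable (fun s : ℝ => μ ⌊s⌋₊) MeasureTheory.volume a b :=
    fun a b => anti.intervalIntegrable
  rw [hgdef t, hgdef n, if_pos (hn1.trans hnt), if_pos hn1]
  set F := ∫ s in (1 : ℝ)..n, μ ⌊s⌋₊ with hF
  have hadd : ∫ s in (1 : ℝ)..t, μ ⌊s⌋₊ = F + ∫ s in (n : ℝ)..t, μ ⌊s⌋₊ :=
    (intervalIntegral.integral_add_adjacent_intervals (hint _ _) (hint _ _)).symm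
  rw [hadd]
  set D := ∫ s in (n : ℝ)..t, μ ⌊s⌋₊ with hD
  have hD0 : 0 ≤ D := intervalIntegral.integral_nonneg hnt fun s _ => hpos _
  have hF0 : 0 ≤ F := intervalIntegral.integral_nonneg hn1 fun s _ => hpos _
  have hD1 : D ≤ μ 0 := by
    have h1 : D ≤ ∫ s in (n : ℝ)..t, μ 0 :=
      intervalIntegral.integral_mono_on hnt (hint _ _) (by simp) fun s _ => hmono (Nat.zero_le _)
    rw [intervalIntegral.integral_const, smul_eq_mul] at h1
    have := hpos 0
    nlinarith
  have hl : 0 < Real.log (1 + n) := Real.log_pos (by linarith)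
  have hF1 : F ≤ |C| * Real.log (1 + n) := by
    have h1 : F ≤ ∑ j ∈ Finset.Ico 1 n, μ j := by
      have := AntitoneOn.integral_le_sum_Ico (f := fun s : ℝ => μ ⌊s⌋₊) hn (anti.antitoneOn _)
      simpa using this
    have h2 : ∑ j ∈ Finset.Ico 1 n, μ j ≤ ∑ j ∈ Finset.Icc 1 n, μ j :=
      Finset.sum_le_sum_of_subset_of_nonneg Finset.Ico_subset_Icc_self fun _ _ _ => hpos _
    have h3 := hC n
    have h4 : C * Real.log (1 + n) ≤ |C| * Real.log (1 + n) :=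
      mul_le_mul_of_nonneg_right (le_abs_self C) hl.le
    linarith
  have hll : Real.log (1 + n) ≤ Real.log (1 + t) := Real.log_le_log (by linarith) (by linarith)
  have hld : Real.log (1 + t) ≤ Real.log (1 + n) + 1 := by
    have h1 := Real.log_le_sub_one_of_pos (x := (1 + t) / (1 + n)) (by apply div_pos <;> linarith)
    rw [Real.log_div (by linarith) (by linarith)] at h1
    have : (1 + t) / (1 + n) ≤ 2 := by
      rw [div_le_iff₀ (by linarith)]; linarith
    linarith
  set l := Real.log (1 + n)
  set L := Real.log (1 + t)
  have hL : 0 < L := hl.trans_le hll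
  have e : L⁻¹ * (F + D) - l⁻¹ * F = (D * l - F * (L - l)) / (L * l) := by
    field_simp
    ring
  rw [e, abs_div, abs_of_pos (mul_pos hL hl), div_le_div_iff₀ (mul_pos hL hl) hl]
  have hA : |D * l - F * (L - l)| ≤ (μ 0 + |C|) * l := by
    have hc := abs_nonneg C
    have h0 := hpos 0
    have p1 : D * l ≤ μ 0 * l := mul_le_mul_of_nonneg_right hD1 hl.le
    have p2 : F * (L - l) ≤ F := mul_le_of_le_one_right hF0 (by linarith)
    have p3 : 0 ≤ F * (L - l) := mul_nonneg hF0 (by linarith)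
    have p4 : 0 ≤ D * l := by positivity
    have p5 : 0 ≤ |C| * l := by positivity
    rw [abs_le]; constructor <;> linarith
  calc _ ≤ (μ 0 + |C|) * l * l := mul_le_mul_of_nonneg_right hA hl.le
    _ ≤ (μ 0 + |C|) * l * L := mul_le_mul_of_nonneg_left hll
        (mul_nonneg (add_nonneg (hpos 0) (abs_nonneg C)) hl.le)
    _ = _ := by ring

/-- for a `T_1`-invariant state (Banach limit) `ξ` on `ℓ^∞` and a
nonincreasing nonnegative sequence `(μ_j)_{j≥1}` with
`sup_k (log(1+k))⁻¹ Σ_{j=1}^k μ_j < ∞`, the function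
`g(t) = (log(1+t))⁻¹ ∫_1^t μ_⌊s⌋ ds` (for `t ≥ 1`, `0` for `0 ≤ t < 1`) satisfies:
(a) `sup_{t∈[n,n+1)} g − inf_{t∈[n,n+1)} g → 0` as `n → ∞`; and
(b) `ξ({∫_{n−1}^{n} |g(e^t) − g(⌊e^t⌋)| dt}_n) = 0`. -/
theorem oscillation_of_gamma_vanishes
    (ξ : (ℕ → ℝ) → ℝ) (hst : IsLinfState ξ) (hT : ShiftInv ξ)
    (μ : ℕ → ℝ) (hmono : Antitone μ) (hpos : ∀ j, 0 ≤ μ j)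
    (hsum : ∃ C, ∀ k : ℕ, ∑ j ∈ Finset.Icc 1 k, μ j ≤ C * Real.log (1 + k))
    (g : ℝ → ℝ)
    (hgdef : ∀ t : ℝ, g t =
      if 1 ≤ t then (Real.log (1 + t))⁻¹ * ∫ s in (1 : ℝ)..t, μ ⌊s⌋₊ else 0) :
    Tendsto (fun n : ℕ =>
        sSup (g '' Set.Ico (n : ℝ) ((n : ℝ) + 1)) - sInf (g '' Set.Ico (n : ℝ) ((n : ℝ) + 1)))
      atTop (nhds 0) ∧
    ξ (fun n => ∫ t in ((n : ℝ) - 1)..(n : ℝ),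
        |g (Real.exp t) - g (⌊Real.exp t⌋₊ : ℝ)|) = 0 := by
  obtain ⟨K, hK, hosc⟩ := aux_osc μ hmono hpos hsum g hgdef
  constructor
  · have hlim : Tendsto (fun n : ℕ => 2 * (K / Real.log (1 + n))) atTop (nhds 0) := by
      have h1 : Tendsto (fun n : ℕ => Real.log (1 + n)) atTop atTop :=
        Real.tendsto_log_atTop.comp
          (tendsto_atTop_add_const_left _ _ tendsto_natCast_atTop_atTop)
      simpa using (h1.const_div_atTop K).const_mul 2
    refine tendsto_of_tendsto_of_tendsto_of_le_of_le' tendsto_const_nhds hlim ?_ ?_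
    · filter_upwards [eventually_ge_atTop 1] with n hn
      have hne : g n ∈ g '' Set.Ico (n : ℝ) ((n : ℝ) + 1) := ⟨n, by simp, rfl⟩
      have hb : BddAbove (g '' Set.Ico (n : ℝ) ((n : ℝ) + 1)) := by
        refine ⟨g n + K / Real.log (1 + n), ?_⟩
        rintro _ ⟨t, ht, rfl⟩
        linarith [(abs_le.1 (hosc n hn t ht.1 ht.2)).2]
      have hb' : BddBelow (g '' Set.Ico (n : ℝ) ((n : ℝ) + 1)) := by
        refine ⟨g n - K / Real.log (1 + n), ?_⟩
        rintro _ ⟨t, ht, rfl⟩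
        linarith [(abs_le.1 (hosc n hn t ht.1 ht.2)).1]
      linarith [le_csSup hb hne, csInf_le hb' hne]
    · filter_upwards [eventually_ge_atTop 1] with n hn
      have hne : (g '' Set.Ico (n : ℝ) ((n : ℝ) + 1)).Nonempty := ⟨g n, n, by simp, rfl⟩
      have h1 : sSup (g '' Set.Ico (n : ℝ) ((n : ℝ) + 1)) ≤ g n + K / Real.log (1 + n) := by
        refine csSup_le hne ?_
        rintro _ ⟨t, ht, rfl⟩
        linarith [(abs_le.1 (hosc n hn t ht.1 ht.2)).2]
      have h2 : g n - K / Real.log (1 + n) ≤ sInf (g '' Set.Ico (n : ℝ) ((n : ℝ) + 1)) := by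
        refine le_csInf hne ?_
        rintro _ ⟨t, ht, rfl⟩
        linarith [(abs_le.1 (hosc n hn t ht.1 ht.2)).1]
      linarith
  · have hnn : ∀ n : ℕ, 0 ≤ ∫ t in ((n : ℝ) - 1)..(n : ℝ),
        |g (Real.exp t) - g (⌊Real.exp t⌋₊ : ℝ)| := fun n =>
      intervalIntegral.integral_nonneg (by linarith) fun t _ => abs_nonneg _
    refine aux_zero ξ hst hT ?_ hnn
    have hlim : Tendsto (fun n : ℕ => K / ((n : ℝ) - 1)) atTop (nhds 0) :=
      (tendsto_atTop_add_const_right _ (-1 : ℝ) tendsto_natCast_atTop_atTop).const_div_atTop K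
    refine tendsto_of_tendsto_of_tendsto_of_le_of_le' tendsto_const_nhds hlim
      (Eventually.of_forall hnn) ?_
    filter_upwards [eventually_ge_atTop 2] with n hn
    have hn2 : (2 : ℝ) ≤ n := by exact_mod_cast hn
    have key := intervalIntegral.norm_integral_le_of_norm_le_const
      (a := (n : ℝ) - 1) (b := n) (C := K / ((n : ℝ) - 1))
      (f := fun t => |g (Real.exp t) - g (⌊Real.exp t⌋₊ : ℝ)|) (fun t ht => by
        rw [Set.uIoc_of_le (by linarith)] at ht
        rw [Real.norm_eq_abs, abs_abs]
        have he : 1 ≤ Real.exp t := Real.one_le_exp (by linarith [ht.1])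
        have hf := Nat.lt_floor_add_one (Real.exp t)
        refine (hosc ⌊Real.exp t⌋₊ (Nat.le_floor (by simpa using he)) (Real.exp t)
          (Nat.floor_le (by linarith)) hf).trans ?_
        have : t ≤ Real.log (1 + ⌊Real.exp t⌋₊) := by
          rw [Real.le_log_iff_exp_le (by positivity)]
          linarith
        exact div_le_div_of_nonneg_left hK (by linarith) (by linarith [ht.1]))
    have h1 : |(n : ℝ) - (n - 1)| = 1 := by norm_num
    rw [h1, mul_one] at key
    exact (le_abs_self _).trans key
end

section
/- Let ξ be a state on ℓ^∞ invariant under the unit shift T_1. Then 𝓛(ξ) is a generalised limit, and for every nonincreasing sequence (μ_j)_{j≥1} of nonnegative reals with sup_k (log(1+k))^{−1} Σ_{j=1}^k μ_j < ∞, setting γ_k := (log(1+k))^{−1} Σ_{j=1}^k μ_j, one has 𝓛(ξ)({γ_{⌈k/2⌉}}_k) = 𝓛(ξ)({γ_k}_k). That is, 𝓛(ξ) belongs to the class DL_2. -/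
open Filter

/-- The map `𝓛`: `𝓛(ξ)(a) := ξ({∫_{n−1}^{n} a_{⌊e^t⌋} dt}_n)`
(`ξ ∘ E ∘ L⁻¹ ∘ p` in the paper's notation). -/
noncomputable def calL (ξ : (ℕ → ℝ) → ℝ) : (ℕ → ℝ) → ℝ :=
  fun a => ξ (fun n => ∫ t in ((n : ℝ) - 1)..(n : ℝ), a ⌊Real.exp t⌋₊)

/-- The sequence `γ_k = (log(1+k))⁻¹ Σ_{j=1}^k μ_j` associated to `(μ_j)_{j≥1}`. -/
noncomputable def gamSeq (μ : ℕ → ℝ) (k : ℕ) : ℝ :=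
  (Real.log (1 + (k : ℝ)))⁻¹ * ∑ j ∈ Finset.Icc 1 k, μ j

/-- Membership in the class `DL_2`: a generalised limit `ω` with
`ω(D_2 γ) = ω(γ)` (i.e. `ω({γ_{⌈k/2⌉}}) = ω({γ_k})`, where `⌈k/2⌉ = (k+1)/2`
in natural division) for every `γ_k = (log(1+k))⁻¹ Σ_{j=1}^k μ_j` with `(μ_j)`
nonincreasing, nonnegative and `sup_k (log(1+k))⁻¹ Σ_{j=1}^k μ_j < ∞`. -/
def IsDL2 (ω : (ℕ → ℝ) → ℝ) : Prop :=
  IsGenLim ω ∧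
  ∀ μ : ℕ → ℝ, Antitone μ → (∀ j, 0 ≤ μ j) →
    (∃ C, ∀ k : ℕ, ∑ j ∈ Finset.Icc 1 k, μ j ≤ C * Real.log (1 + k)) →
    ω (fun k => gamSeq μ ((k + 1) / 2)) = ω (gamSeq μ)

section helpers

open MeasureTheory Topology

lemma IsBddSeq.add' {a b : ℕ → ℝ} (ha : IsBddSeq a) (hb : IsBddSeq b) : IsBddSeq (a + b) := by
  obtain ⟨C, hC⟩ := ha
  obtain ⟨D, hD⟩ := hb
  exact ⟨C + D, fun k => (abs_add_le _ _).trans (add_le_add (hC k) (hD k))⟩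

lemma IsBddSeq.smul' {a : ℕ → ℝ} (c : ℝ) (ha : IsBddSeq a) : IsBddSeq (c • a) := by
  obtain ⟨C, hC⟩ := ha
  refine ⟨|c| * C, fun k => ?_⟩
  simp only [Pi.smul_apply, smul_eq_mul, abs_mul]
  exact mul_le_mul_of_nonneg_left (hC k) (abs_nonneg _)

lemma IsBddSeq.const' (c : ℝ) : IsBddSeq (fun _ => c) := ⟨|c|, fun _ => le_rfl⟩

lemma state_shift {ξ : (ℕ → ℝ) → ℝ} (hT : ShiftInv ξ) {b : ℕ → ℝ} (hb : IsBddSeq b) (N : ℕ) :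
    ξ (fun n => b (n + N)) = ξ b := by
  induction N with
  | zero => rfl
  | succ N ih =>
    rw [← ih, ← hT (fun n => b (n + N)) ⟨hb.choose, fun k => hb.choose_spec _⟩]
    congr 1
    funext k
    congr 1
    omega

lemma state_le {ξ : (ℕ → ℝ) → ℝ} (hst : IsLinfState ξ) (hT : ShiftInv ξ) {b : ℕ → ℝ}
    (hb : IsBddSeq b) (M : ℝ) (N : ℕ) (h : ∀ n, N ≤ n → b n ≤ M) : ξ b ≤ M := by
  obtain ⟨hadd, hsmul, hpos, hone⟩ := hst
  rw [← state_shift hT hb N]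
  have hb' : IsBddSeq (fun n => b (n + N)) := ⟨hb.choose, fun k => hb.choose_spec _⟩
  have h1 : IsBddSeq (M • (fun _ : ℕ => (1:ℝ))) := (IsBddSeq.const' 1).smul' M
  have h2 : IsBddSeq ((-1 : ℝ) • (fun n => b (n + N))) := hb'.smul' _
  have := hpos _ (h1.add' h2) (fun k => by
    have := h (k + N) (by omega)
    simp; linarith)
  rw [hadd _ _ h1 h2, hsmul _ _ (IsBddSeq.const' 1), hsmul _ _ hb', hone] at this
  linarith

lemma intble {a : ℕ → ℝ} (ha : IsBddSeq a) (x y : ℝ) :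
    IntervalIntegrable (fun t => a ⌊Real.exp t⌋₊) volume x y := by
  obtain ⟨C, hC⟩ := ha
  have hm : Measurable (fun t => a ⌊Real.exp t⌋₊) :=
    (measurable_of_countable a).comp (Nat.measurable_floor.comp Real.measurable_exp)
  refine (intervalIntegrable_const (c := C) (μ := volume)).mono_fun hm.aestronglyMeasurable ?_
  refine Filter.Eventually.of_forall fun t => ?_
  exact (hC _).trans (le_abs_self _)

lemma int_bdd {a : ℕ → ℝ} {C : ℝ} (hC : ∀ k, |a k| ≤ C) (x y : ℝ) :
    |∫ t in x..y, a ⌊Real.exp t⌋₊| ≤ C * |y - x| := by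
  rw [← Real.norm_eq_abs]
  exact intervalIntegral.norm_integral_le_of_norm_le_const fun t _ => hC _

lemma E_bdd {a : ℕ → ℝ} (ha : IsBddSeq a) :
    IsBddSeq (fun n => ∫ t in ((n : ℝ) - 1)..(n : ℝ), a ⌊Real.exp t⌋₊) := by
  obtain ⟨C, hC⟩ := ha
  refine ⟨C, fun n => ?_⟩
  have := int_bdd hC ((n:ℝ) - 1) n
  simpa using this

lemma calL_add {ξ : (ℕ → ℝ) → ℝ} (hst : IsLinfState ξ) {a b : ℕ → ℝ} (ha : IsBddSeq a)
    (hb : IsBddSeq b) : calL ξ (a + b) = calL ξ a + calL ξ b := by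
  unfold calL
  rw [← hst.1 _ _ (E_bdd ha) (E_bdd hb)]
  congr 1
  funext n
  exact intervalIntegral.integral_add (intble ha _ _) (intble hb _ _)

lemma calL_smul {ξ : (ℕ → ℝ) → ℝ} (hst : IsLinfState ξ) (c : ℝ) {a : ℕ → ℝ} (ha : IsBddSeq a) :
    calL ξ (c • a) = c * calL ξ a := by
  unfold calL
  rw [← hst.2.1 _ _ (E_bdd ha)]
  congr 1
  funext n
  exact intervalIntegral.integral_const_mul _ _

lemma calL_le {ξ : (ℕ → ℝ) → ℝ} (hst : IsLinfState ξ) (hT : ShiftInv ξ) {a : ℕ → ℝ}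
    (ha : IsBddSeq a) (M : ℝ) (h : ∀ᶠ k in atTop, a k ≤ M) : calL ξ a ≤ M := by
  obtain ⟨K, hK⟩ := eventually_atTop.1 h
  refine state_le hst hT (E_bdd ha) M (K + 1) fun n hn => ?_
  have : ∫ t in ((n : ℝ) - 1)..(n : ℝ), a ⌊Real.exp t⌋₊ ≤ ∫ t in ((n : ℝ) - 1)..(n : ℝ), M := by
    refine intervalIntegral.integral_mono_on (by linarith) (intble ha _ _)
      intervalIntegrable_const fun t ht => hK _ (Nat.le_floor ?_)
    have h1 : ((K + 1 : ℕ) : ℝ) ≤ n := by exact_mod_cast hn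
    push_cast at h1
    have := Real.add_one_le_exp t
    linarith [ht.1]
  simpa using this

lemma calL_ge {ξ : (ℕ → ℝ) → ℝ} (hst : IsLinfState ξ) (hT : ShiftInv ξ) {a : ℕ → ℝ}
    (ha : IsBddSeq a) (M : ℝ) (h : ∀ᶠ k in atTop, M ≤ a k) : M ≤ calL ξ a := by
  have := calL_le hst hT (ha.smul' (-1)) (-M) (h.mono fun k hk => by simpa using hk)
  rw [calL_smul hst _ ha] at this
  linarith

lemma calL_zero {ξ : (ℕ → ℝ) → ℝ} (hst : IsLinfState ξ) (hT : ShiftInv ξ) {a : ℕ → ℝ}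
    (ha : IsBddSeq a) (h : Tendsto a atTop (𝓝 0)) : calL ξ a = 0 := by
  apply le_antisymm
  · refine le_of_forall_pos_le_add fun ε hε => ?_
    rw [zero_add]
    exact calL_le hst hT ha ε ((h.eventually_lt_const hε).mono fun _ => le_of_lt)
  · refine le_of_forall_pos_le_add fun ε hε => ?_
    have := calL_ge hst hT ha (-ε) ((h.eventually_const_lt (neg_lt_zero.2 hε)).mono fun _ => le_of_lt)
    linarith

lemma calL_genLim {ξ : (ℕ → ℝ) → ℝ} (hst : IsLinfState ξ) (hT : ShiftInv ξ) :
    IsGenLim (calL ξ) := by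
  refine ⟨⟨fun a b ha hb => calL_add hst ha hb, fun c a ha => calL_smul hst c ha,
    fun a ha h => calL_ge hst hT ha 0 (Eventually.of_forall h), ?_⟩, fun a ha h => ⟨?_, ?_⟩⟩
  · exact le_antisymm (calL_le hst hT (IsBddSeq.const' 1) 1 (Eventually.of_forall fun _ => le_rfl))
      (calL_ge hst hT (IsBddSeq.const' 1) 1 (Eventually.of_forall fun _ => le_rfl))
  · refine le_of_forall_lt fun M hM => ?_
    obtain ⟨M', h1, h2⟩ := exists_between hM
    refine h1.trans_le (calL_ge hst hT ha M' ?_)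
    exact (eventually_lt_of_lt_liminf h2 (isBoundedUnder_of ⟨0, h⟩)).mono fun _ => le_of_lt
  · refine le_of_forall_gt fun M hM => ?_
    obtain ⟨M', h1, h2⟩ := exists_between hM
    refine (calL_le hst hT ha M' ?_).trans_lt h2
    obtain ⟨C, hC⟩ := ha
    exact (eventually_lt_of_limsup_lt h1
      (isBoundedUnder_of ⟨C, fun k => (le_abs_self _).trans (hC k)⟩)).mono fun _ => le_of_lt

/-- Invariance under `k ↦ k / 2` (floor). -/
lemma calL_half {ξ : (ℕ → ℝ) → ℝ} (hst : IsLinfState ξ) (hT : ShiftInv ξ) {a : ℕ → ℝ}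
    (ha : IsBddSeq a) : calL ξ (fun k => a (k / 2)) = calL ξ a := by
  have hH : IsBddSeq (fun n : ℕ => ∫ t in ((n : ℝ) - 1 - Real.log 2)..((n:ℝ) - 1),
      a ⌊Real.exp t⌋₊) := by
    obtain ⟨C, hC⟩ := ha
    exact ⟨C * |Real.log 2|, fun n => (int_bdd hC _ _).trans_eq (by congr 2; ring)⟩
  set H : ℕ → ℝ := fun n : ℕ => ∫ t in ((n : ℝ) - 1 - Real.log 2)..((n:ℝ) - 1),
      a ⌊Real.exp t⌋₊ with hHdef
  have hH' : IsBddSeq (fun n => H (n + 1)) := ⟨hH.choose, fun k => hH.choose_spec _⟩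
  have ha2 : IsBddSeq (fun k => a (k / 2)) := ⟨ha.choose, fun k => ha.choose_spec _⟩
  have key : (fun n : ℕ => ∫ t in ((n : ℝ) - 1)..(n : ℝ), a (⌊Real.exp t⌋₊ / 2)) +
      (fun n => H (n + 1)) = (fun n : ℕ => ∫ t in ((n : ℝ) - 1)..(n : ℝ), a ⌊Real.exp t⌋₊) + H := by
    funext n
    have e1 : ∀ t : ℝ, a (⌊Real.exp t⌋₊ / 2) = a ⌊Real.exp (t - Real.log 2)⌋₊ := by
      intro t
      rw [Real.exp_sub, Real.exp_log two_pos, ← Nat.floor_div_ofNat]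
    simp only [Pi.add_apply, hHdef, e1]
    rw [intervalIntegral.integral_comp_sub_right (fun t => a ⌊Real.exp t⌋₊) (Real.log 2)]
    push_cast
    rw [add_sub_cancel_right, intervalIntegral.integral_add_adjacent_intervals
      (intble ha _ _) (intble ha _ _), add_comm, intervalIntegral.integral_add_adjacent_intervals
      (intble ha _ _) (intble ha _ _)]
  have h1 := hst.1 _ _ (E_bdd ha2) hH'
  have h2 := hst.1 _ _ (E_bdd ha) hH
  have h3 := hT H hH
  rw [key, h2, h3] at h1
  unfold calL
  linarith

lemma gam_bdd {μ : ℕ → ℝ} (hμ : ∀ j, 0 ≤ μ j)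
    {C : ℝ} (hC : ∀ k : ℕ, ∑ j ∈ Finset.Icc 1 k, μ j ≤ C * Real.log (1 + k)) (k : ℕ) :
    |gamSeq μ k| ≤ |C| := by
  unfold gamSeq
  have hs : 0 ≤ ∑ j ∈ Finset.Icc 1 k, μ j := Finset.sum_nonneg fun j _ => hμ j
  have hl : 0 ≤ Real.log (1 + (k:ℝ)) := Real.log_nonneg (by linarith [(Nat.cast_nonneg k : (0:ℝ) ≤ k)])
  rw [abs_of_nonneg (mul_nonneg (inv_nonneg.2 hl) hs)]
  rcases hl.eq_or_lt with h | h
  · rw [← h]; simp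
  · rw [inv_mul_le_iff₀ h]
    have := mul_le_mul_of_nonneg_right (le_abs_self C) hl
    linarith [hC k]

lemma gam_diff {μ : ℕ → ℝ} (hanti : Antitone μ) (hμ : ∀ j, 0 ≤ μ j)
    {C : ℝ} (hC : ∀ k : ℕ, ∑ j ∈ Finset.Icc 1 k, μ j ≤ C * Real.log (1 + k)) :
    Tendsto (fun k => gamSeq μ (k + 1) - gamSeq μ k) atTop (𝓝 0) := by
  have hlog : Tendsto (fun k : ℕ => Real.log (1 + ((k + 1 : ℕ) : ℝ))) atTop atTop :=
    Real.tendsto_log_atTop.comp (tendsto_atTop_add_const_left _ _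
      (tendsto_natCast_atTop_atTop.comp (tendsto_add_atTop_nat 1)))
  have hlim : Tendsto (fun k : ℕ => (μ 0 + |C| * Real.log 2) *
      (Real.log (1 + ((k + 1 : ℕ) : ℝ)))⁻¹) atTop (𝓝 0) := by
    simpa using (tendsto_inv_atTop_zero.comp hlog).const_mul (μ 0 + |C| * Real.log 2)
  refine squeeze_zero_norm' ?_ hlim
  filter_upwards [eventually_ge_atTop 1] with k hk
  have hk' : (1:ℝ) ≤ k := by exact_mod_cast hk
  have hl1 : 0 < Real.log (1 + (k:ℝ)) := Real.log_pos (by linarith)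
  have hl2 : 0 < Real.log (1 + ((k + 1 : ℕ):ℝ)) := Real.log_pos (by push_cast; linarith)
  have hle : Real.log (1 + (k:ℝ)) ≤ Real.log (1 + ((k + 1 : ℕ):ℝ)) :=
    Real.log_le_log (by linarith) (by push_cast; linarith)
  have hle2 : Real.log (1 + ((k + 1 : ℕ):ℝ)) ≤ Real.log 2 + Real.log (1 + (k:ℝ)) := by
    rw [← Real.log_mul (by norm_num) (by linarith)]
    exact Real.log_le_log (by push_cast; linarith) (by push_cast; linarith)
  have hg := gam_bdd hμ hC k
  have e : gamSeq μ (k + 1) - gamSeq μ k = (μ (k + 1) - gamSeq μ k *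
      (Real.log (1 + ((k + 1 : ℕ):ℝ)) - Real.log (1 + (k:ℝ)))) *
      (Real.log (1 + ((k + 1 : ℕ) : ℝ)))⁻¹ := by
    unfold gamSeq
    rw [Finset.sum_Icc_succ_top (by omega)]
    field_simp
    ring
  rw [e, norm_mul, Real.norm_eq_abs, Real.norm_eq_abs, abs_of_pos (inv_pos.2 hl2)]
  refine mul_le_mul_of_nonneg_right ?_ (inv_pos.2 hl2).le
  refine (abs_sub _ _).trans (add_le_add ?_ ?_)
  · rw [abs_of_nonneg (hμ _)]
    exact hanti (Nat.zero_le _)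
  · rw [abs_mul]
    refine mul_le_mul hg ?_ (abs_nonneg _) (abs_nonneg _)
    rw [abs_of_nonneg (by linarith)]
    linarith

end helpers

/-- if `ξ` is a state on `ℓ^∞` invariant under the unit shift `T_1`,
then `𝓛(ξ)` is a generalised limit and `𝓛(ξ)(D_2 γ) = 𝓛(ξ)(γ)` for every sequence
`γ_k = (log(1+k))⁻¹ Σ_{j=1}^k μ_j` with `(μ_j)` nonincreasing nonnegative and
`sup_k (log(1+k))⁻¹ Σ_{j=1}^k μ_j < ∞`; that is, `𝓛(ξ) ∈ DL_2`. -/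
theorem calL_mem_DL2
    (ξ : (ℕ → ℝ) → ℝ) (hst : IsLinfState ξ) (hT : ShiftInv ξ) :
    IsDL2 (calL ξ) := by
  refine ⟨calL_genLim hst hT, fun μ hanti hμ ⟨C, hC⟩ => ?_⟩
  have hg : IsBddSeq (gamSeq μ) := ⟨|C|, gam_bdd hμ hC⟩
  have hg2 : IsBddSeq (fun k => gamSeq μ (k / 2)) := ⟨|C|, fun k => gam_bdd hμ hC _⟩
  have hg3 : IsBddSeq (fun k => gamSeq μ ((k + 1) / 2)) := ⟨|C|, fun k => gam_bdd hμ hC _⟩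
  have hd : IsBddSeq (fun k => gamSeq μ ((k + 1) / 2) - gamSeq μ (k / 2)) :=
    ⟨|C| + |C|, fun k => (abs_sub _ _).trans (add_le_add (gam_bdd hμ hC _) (gam_bdd hμ hC _))⟩
  have hlim : Tendsto (fun k => gamSeq μ ((k + 1) / 2) - gamSeq μ (k / 2)) atTop (nhds 0) := by
    have hh : Tendsto (fun k : ℕ => k / 2) atTop atTop := Nat.tendsto_div_const_atTop (by norm_num)
    have h0 := ((gam_diff hanti hμ hC).comp hh).norm
    rw [norm_zero] at h0
    refine squeeze_zero_norm (fun k => ?_) h0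
    rcases (by omega : (k + 1) / 2 = k / 2 ∨ (k + 1) / 2 = k / 2 + 1) with h | h
    · rw [h, sub_self, norm_zero]
      exact norm_nonneg _
    · rw [h]
      exact le_rfl
  have e : (fun k => gamSeq μ ((k + 1) / 2)) =
      (fun k => gamSeq μ ((k + 1) / 2) - gamSeq μ (k / 2)) + (fun k => gamSeq μ (k / 2)) := by
    funext k; simp
  rw [e, calL_add hst hd hg2, calL_zero hst hT hd hlim, zero_add, calL_half hst hT hg]
end
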